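/- arXiv:2301.11415 — 2 statements merged into one kernel-verified Lean document; each statement's English description precedes it below -/
import Mathlib

section
/- Consider the infinite-horizon Bayesian risk MDP with CVaR risk measure, with exact Bellman operator T on bounded functions V : S × Δ(Θ) → ℝ given by (T V)(s,μ) = min_{a ∈ A} ρ_μ(θ ↦ Σ_ξ f(θ,ξ)·(C(s,a,ξ) + γ·V(g(s,a,ξ), B(μ,ξ)))) and unique bounded fixed point V*. Let M̂ ⊆ Δ(Θ) be a finite nonempty subset, and suppose interpolation weights are given: for every s ∈ S, a ∈ A, ξ ∈ Ξ, μ ∈ M̂ there is w_{s,a,ξ,μ} : M̂ → ℝ with w_{s,a,ξ,μ}(μ') ≥ 0, Σ_{μ' ∈ M̂} w_{s,a,ξ,μ}(μ') = 1, and Σ_{μ' ∈ M̂} w_{s,a,ξ,μ}(μ')·μ'(θ) = B(μ,ξ)(θ) for all θ ∈ Θ. Define the approximate Bellman operator T̂ on functions V : S × M̂ → ℝ by (T̂ V)(s,μ) = min_{a ∈ A} ρ_μ(θ ↦ Σ_ξ f(θ,ξ)·(C(s,a,ξ) + γ·Σ_{μ' ∈ M̂} w_{s,a,ξ,μ}(μ')·V(g(s,a,ξ),μ'))),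 and let V̂* be its unique fixed point. If for every s ∈ S the map μ ↦ V*(s,μ) is concave on Δ(Θ), then V̂*(s,μ) ≤ V*(s,μ) for every s ∈ S and μ ∈ M̂; that is, the approximate optimal value function is a lower bound on the exact optimal value function. -/
open scoped BigOperators

noncomputable section

/-- Membership in the probability simplex `Δ(Θ)`. -/
def InSimplex {Θ : Type*} [Fintype Θ] (μ : Θ → ℝ) : Prop :=
  (∀ θ, 0 ≤ μ θ) ∧ ∑ θ, μ θ = 1

/-- Bayes update `B(μ,ξ)` of a belief `μ` after observing `ξ`, under the
parametric likelihood `f`; it is `μ` itself when the normalizing constant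
is not positive. -/
def bayesUpdate {Θ Ξ : Type*} [Fintype Θ] (f : Θ → Ξ → ℝ)
    (μ : Θ → ℝ) (ξ : Ξ) : Θ → ℝ := by
  classical
  exact if 0 < ∑ θ', μ θ' * f θ' ξ
    then fun θ => μ θ * f θ ξ / ∑ θ', μ θ' * f θ' ξ
    else μ

/-- The CVaR risk functional at level `α` of `Z : Θ → ℝ` under belief `μ`,
via the Rockafellar–Uryasev formula. -/
def cvarRisk {Θ : Type*} [Fintype Θ] (α : ℝ) (μ : Θ → ℝ) (Z : Θ → ℝ) : ℝ :=
  ⨅ φ : ℝ, φ + (1 - α)⁻¹ * ∑ θ, μ θ * max (Z θ - φ) 0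

/-- The exact optimal Bellman operator of the infinite-horizon Bayesian risk
MDP with CVaR risk measure. -/
def brBellman {S A Θ Ξ : Type*} [Fintype Θ] [Fintype Ξ] [Fintype A] [Nonempty A]
    (f : Θ → Ξ → ℝ) (g : S → A → Ξ → S) (C : S → A → Ξ → ℝ) (γ α : ℝ)
    (V : S → (Θ → ℝ) → ℝ) : S → (Θ → ℝ) → ℝ :=
  fun s μ => ⨅ a : A, cvarRisk α μ (fun θ =>
    ∑ ξ, f θ ξ * (C s a ξ + γ * V (g s a ξ) (bayesUpdate f μ ξ)))

/-- The approximate Bellman operator in which the Bayes update is replaced by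
an interpolation, with weights `w`, over a finite belief set `Mhat`. -/
def brApproxBellman {S A Θ Ξ : Type*} [Fintype Θ] [Fintype Ξ] [Fintype A]
    [Nonempty A]
    (f : Θ → Ξ → ℝ) (g : S → A → Ξ → S) (C : S → A → Ξ → ℝ) (γ α : ℝ)
    (Mhat : Finset (Θ → ℝ)) (w : S → A → Ξ → (Θ → ℝ) → (Θ → ℝ) → ℝ)
    (V : S → (Θ → ℝ) → ℝ) : S → (Θ → ℝ) → ℝ :=
  fun s μ => ⨅ a : A, cvarRisk α μ (fun θ =>
    ∑ ξ, f θ ξ * (C s a ξ + γ * ∑ μ' ∈ Mhat, w s a ξ μ μ' * V (g s a ξ) μ'))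

/-!
Jensen's inequality for the concave `V*` says that interpolating `V*` over `Mhat` undershoots its
value at the Bayes update. CVaR is monotone and commutes with adding constants, so a uniform bound
`V̂* ≤ V* + d` on `Mhat` improves after one Bellman step to `V̂* ≤ V* + γ * d`. For
`d = sup (V̂* - V*)` this gives `d ≤ γ * d`, hence `d ≤ 0`.
-/

theorem nonpos_of_bddAbove_of_le_mul {ι : Type*} {D : ι → ℝ} {γ : ℝ} (hγ1 : γ < 1)
    (hbdd : BddAbove (Set.range D))
    (hstep : ∀ d, (∀ i, D i ≤ d) → ∀ i, D i ≤ γ * d) (i : ι) : D i ≤ 0 := by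
  have : Nonempty ι := ⟨i⟩
  have hsup : ⨆ j, D j ≤ γ * ⨆ j, D j := ciSup_le (hstep _ (le_ciSup hbdd))
  have hsup_nonpos : ⨆ j, D j ≤ 0 := by nlinarith
  exact (le_ciSup hbdd i).trans hsup_nonpos

theorem concaveOn_stdSimplex_of_forall_inSimplex {Θ : Type*} [Fintype Θ] {V : (Θ → ℝ) → ℝ}
    (hV : ∀ μ₁ μ₂ : Θ → ℝ, InSimplex μ₁ → InSimplex μ₂ → ∀ t : ℝ, 0 ≤ t → t ≤ 1 →
      t * V μ₁ + (1 - t) * V μ₂ ≤ V (fun θ => t * μ₁ θ + (1 - t) * μ₂ θ)) :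
    ConcaveOn ℝ (stdSimplex ℝ Θ) V := by
  refine ⟨convex_stdSimplex ℝ Θ, fun μ₁ hμ₁ μ₂ hμ₂ t t' ht ht' htt' => ?_⟩
  obtain rfl : t' = 1 - t := by linarith
  exact hV μ₁ μ₂ hμ₁ hμ₂ t ht (by linarith)

theorem sum_mul_le_map_sum_add_of_concaveOn {E : Type*} [AddCommGroup E] [Module ℝ E]
    {K : Set E} {U V : E → ℝ} {t : Finset E} {w : E → ℝ} {d : ℝ} (hV : ConcaveOn ℝ K V)
    (hw0 : ∀ x ∈ t, 0 ≤ w x) (hw1 : ∑ x ∈ t, w x = 1) (ht : ∀ x ∈ t, x ∈ K)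
    (hUV : ∀ x ∈ t, U x ≤ V x + d) :
    ∑ x ∈ t, w x * U x ≤ V (∑ x ∈ t, w x • x) + d :=
  calc ∑ x ∈ t, w x * U x
    _ ≤ ∑ x ∈ t, w x * (V x + d) :=
        Finset.sum_le_sum fun x hx => mul_le_mul_of_nonneg_left (hUV x hx) (hw0 x hx)
    _ = ∑ x ∈ t, w x * V x + d := by
        simp only [mul_add, Finset.sum_add_distrib, ← Finset.sum_mul, hw1, one_mul]
    _ ≤ V (∑ x ∈ t, w x • x) + d := by
        gcongr
        exact hV.le_map_sum hw0 hw1 ht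

theorem sum_mul_add_discount_le {Ξ : Type*} [Fintype Ξ] {p c u v : Ξ → ℝ} {γ d : ℝ}
    (hp : InSimplex p) (hγ0 : 0 ≤ γ) (huv : ∀ ξ, u ξ ≤ v ξ + d) :
    ∑ ξ, p ξ * (c ξ + γ * u ξ) ≤ ∑ ξ, p ξ * (c ξ + γ * v ξ) + γ * d :=
  calc ∑ ξ, p ξ * (c ξ + γ * u ξ)
    _ ≤ ∑ ξ, p ξ * (c ξ + γ * (v ξ + d)) := by
        gcongr with ξ
        · exact hp.1 ξ
        · exact huv ξ
    _ = ∑ ξ, p ξ * (c ξ + γ * v ξ) + γ * d := by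
        simp only [mul_add, ← add_assoc, Finset.sum_add_distrib, ← Finset.sum_mul, hp.2, one_mul]

theorem ciInf_le_ciInf_add_const {ι : Type*} [Finite ι] [Nonempty ι] {F G : ι → ℝ} {c : ℝ}
    (h : ∀ i, F i ≤ G i + c) : ⨅ i, F i ≤ (⨅ i, G i) + c := by
  rw [ciInf_add (Set.finite_range G).bddBelow]
  exact ciInf_mono (Set.finite_range F).bddBelow h

section CVaR

variable {Θ : Type*} [Fintype Θ] {α : ℝ} {μ : Θ → ℝ}

theorem sum_mul_le_add_inv_mul_sum_max (hα0 : 0 ≤ α) (hα1 : α < 1) (hμ : InSimplex μ)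
    (Z : Θ → ℝ) (φ : ℝ) :
    ∑ θ, μ θ * Z θ ≤ φ + (1 - α)⁻¹ * ∑ θ, μ θ * max (Z θ - φ) 0 := by
  have one_le_inv : 1 ≤ (1 - α)⁻¹ := (one_le_inv₀ (by linarith)).2 (by linarith)
  have excess_nonneg : 0 ≤ ∑ θ, μ θ * max (Z θ - φ) 0 :=
    Finset.sum_nonneg fun θ _ => mul_nonneg (hμ.1 θ) (le_max_right _ _)
  calc ∑ θ, μ θ * Z θ
    _ = φ + ∑ θ, μ θ * (Z θ - φ) := by
        simp only [mul_sub, Finset.sum_sub_distrib, ← Finset.sum_mul, hμ.2, one_mul,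
          add_sub_cancel]
    _ ≤ φ + ∑ θ, μ θ * max (Z θ - φ) 0 := by
        gcongr with θ
        · exact hμ.1 θ
        · exact le_max_left _ _
    _ ≤ φ + (1 - α)⁻¹ * ∑ θ, μ θ * max (Z θ - φ) 0 := by
        gcongr
        exact le_mul_of_one_le_left excess_nonneg one_le_inv

-- Without a lower bound, the real-valued infimum defining `cvarRisk` would be the junk value `0`.
theorem bddBelow_range_add_inv_mul_sum_max (hα0 : 0 ≤ α) (hα1 : α < 1) (hμ : InSimplex μ)
    (Z : Θ → ℝ) :
    BddBelow (Set.range fun φ : ℝ => φ + (1 - α)⁻¹ * ∑ θ, μ θ * max (Z θ - φ) 0) :=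
  ⟨∑ θ, μ θ * Z θ, Set.forall_mem_range.2 (sum_mul_le_add_inv_mul_sum_max hα0 hα1 hμ Z)⟩

theorem cvarRisk_mono (hα0 : 0 ≤ α) (hα1 : α < 1) (hμ : InSimplex μ) :
    Monotone (cvarRisk α μ) := by
  intro Z₁ Z₂ hZ
  refine ciInf_mono (bddBelow_range_add_inv_mul_sum_max hα0 hα1 hμ Z₁) fun φ => ?_
  have : 0 ≤ (1 - α)⁻¹ := inv_nonneg.2 (by linarith)
  gcongr with θ
  · exact hμ.1 θ
  · exact hZ θ

theorem cvarRisk_add_const (hα0 : 0 ≤ α) (hα1 : α < 1) (hμ : InSimplex μ) (Z : Θ → ℝ) (c : ℝ) :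
    cvarRisk α μ (fun θ => Z θ + c) = cvarRisk α μ Z + c := by
  unfold cvarRisk
  rw [ciInf_add (bddBelow_range_add_inv_mul_sum_max hα0 hα1 hμ Z)]
  refine ((Equiv.addRight c).iInf_congr fun φ => ?_).symm
  simp only [Equiv.coe_addRight, add_sub_add_right_eq_sub, add_right_comm]

end CVaR

section Bellman

variable {S A Θ Ξ : Type*} [Fintype A] [Nonempty A] [Fintype Θ] [Fintype Ξ]
  {f : Θ → Ξ → ℝ} {g : S → A → Ξ → S} {C : S → A → Ξ → ℝ} {γ α : ℝ}
  {Mhat : Finset (Θ → ℝ)} {w : S → A → Ξ → (Θ → ℝ) → (Θ → ℝ) → ℝ} {U V : S → (Θ → ℝ) → ℝ}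

theorem brApproxBellman_le_brBellman_add {s : S} {μ : Θ → ℝ} {d : ℝ}
    (hf : ∀ θ, InSimplex (f θ)) (hγ0 : 0 ≤ γ) (hα0 : 0 ≤ α) (hα1 : α < 1) (hμ : InSimplex μ)
    (hinterp : ∀ a ξ, ∑ μ' ∈ Mhat, w s a ξ μ μ' * U (g s a ξ) μ' ≤
      V (g s a ξ) (bayesUpdate f μ ξ) + d) :
    brApproxBellman f g C γ α Mhat w U s μ ≤ brBellman f g C γ α V s μ + γ * d := by
  refine ciInf_le_ciInf_add_const fun a => ?_
  rw [← cvarRisk_add_const hα0 hα1 hμ]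
  exact cvarRisk_mono hα0 hα1 hμ fun θ => sum_mul_add_discount_le (hf θ) hγ0 (hinterp a)

theorem approx_value_lower_bound_general
    (hf : ∀ θ, InSimplex (f θ)) (hγ0 : 0 ≤ γ) (hγ1 : γ < 1) (hα0 : 0 ≤ α) (hα1 : α < 1)
    (hMsub : ∀ μ ∈ Mhat, InSimplex μ)
    (hw0 : ∀ s a ξ, ∀ μ ∈ Mhat, ∀ μ' ∈ Mhat, 0 ≤ w s a ξ μ μ')
    (hw1 : ∀ s a ξ, ∀ μ ∈ Mhat, ∑ μ' ∈ Mhat, w s a ξ μ μ' = 1)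
    (hwB : ∀ s a ξ, ∀ μ ∈ Mhat, ∀ θ, ∑ μ' ∈ Mhat, w s a ξ μ μ' * μ' θ = bayesUpdate f μ ξ θ)
    (hconcave : ∀ s, ConcaveOn ℝ (stdSimplex ℝ Θ) (V s))
    (hsuper : ∀ s, ∀ μ ∈ Mhat, brBellman f g C γ α V s μ ≤ V s μ)
    (hsub : ∀ s, ∀ μ ∈ Mhat, U s μ ≤ brApproxBellman f g C γ α Mhat w U s μ)
    (hbdd : BddAbove (Set.range fun p : S × Mhat => U p.1 p.2 - V p.1 p.2)) :
    ∀ s, ∀ μ ∈ Mhat, U s μ ≤ V s μ := by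
  intro s μ hμ
  refine sub_nonpos.1 (nonpos_of_bddAbove_of_le_mul hγ1 hbdd ?_ (s, ⟨μ, hμ⟩))
  rintro d hd ⟨s, μ, hμ⟩
  have hUV : ∀ s, ∀ μ ∈ Mhat, U s μ ≤ V s μ + d := fun s μ hμ =>
    sub_le_iff_le_add'.1 (hd (s, ⟨μ, hμ⟩))
  have hbarycenter : ∀ a ξ, ∑ μ' ∈ Mhat, w s a ξ μ μ' • μ' = bayesUpdate f μ ξ := fun a ξ => by
    ext θ
    simpa only [Finset.sum_apply, Pi.smul_apply, smul_eq_mul] using hwB s a ξ μ hμ θ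
  have hinterp : ∀ a ξ, ∑ μ' ∈ Mhat, w s a ξ μ μ' * U (g s a ξ) μ' ≤
      V (g s a ξ) (bayesUpdate f μ ξ) + d := fun a ξ => by
    rw [← hbarycenter a ξ]
    exact sum_mul_le_map_sum_add_of_concaveOn (hconcave _) (hw0 s a ξ μ hμ) (hw1 s a ξ μ hμ)
      hMsub (hUV _)
  rw [sub_le_iff_le_add']
  calc U s μ
    _ ≤ brApproxBellman f g C γ α Mhat w U s μ := hsub s μ hμ
    _ ≤ brBellman f g C γ α V s μ + γ * d :=
        brApproxBellman_le_brBellman_add hf hγ0 hα0 hα1 (hMsub μ hμ) hinterp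
    _ ≤ V s μ + γ * d := by
        gcongr
        exact hsuper s μ hμ

end Bellman

/-- If the exact optimal value function `V*` (the unique bounded
fixed point of the exact Bellman operator) is concave in the belief, and the
interpolation weights are nonnegative, sum to one, and reproduce the Bayes
update as a convex combination of beliefs in the finite set `Mhat`, then the
fixed point `V̂*` of the approximate Bellman operator is a lower bound on `V*`
on `Mhat`. -/
theorem approx_value_lower_bound
    {S A Θ Ξ : Type*} [Fintype S] [Nonempty S] [Fintype A] [Nonempty A]
    [Fintype Θ] [Nonempty Θ] [Fintype Ξ] [Nonempty Ξ]
    (f : Θ → Ξ → ℝ) (hf0 : ∀ θ ξ, 0 ≤ f θ ξ) (hf1 : ∀ θ, ∑ ξ, f θ ξ = 1)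
    (g : S → A → Ξ → S) (C : S → A → Ξ → ℝ)
    (γ : ℝ) (hγ0 : 0 ≤ γ) (hγ1 : γ < 1)
    (α : ℝ) (hα0 : 0 ≤ α) (hα1 : α < 1)
    (Mhat : Finset (Θ → ℝ)) (hMne : Mhat.Nonempty)
    (hMsub : ∀ μ ∈ Mhat, InSimplex μ)
    (w : S → A → Ξ → (Θ → ℝ) → (Θ → ℝ) → ℝ)
    (hw0 : ∀ s a ξ, ∀ μ ∈ Mhat, ∀ μ' ∈ Mhat, 0 ≤ w s a ξ μ μ')
    (hw1 : ∀ s a ξ, ∀ μ ∈ Mhat, ∑ μ' ∈ Mhat, w s a ξ μ μ' = 1)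
    (hwB : ∀ s a ξ, ∀ μ ∈ Mhat, ∀ θ,
      ∑ μ' ∈ Mhat, w s a ξ μ μ' * μ' θ = bayesUpdate f μ ξ θ)
    (Vstar : S → (Θ → ℝ) → ℝ)
    (hVstarBdd : ∃ M, ∀ s μ, InSimplex μ → |Vstar s μ| ≤ M)
    (hVstarFix : ∀ s μ, InSimplex μ → brBellman f g C γ α Vstar s μ = Vstar s μ)
    (hVstarConcave : ∀ s (μ₁ μ₂ : Θ → ℝ), InSimplex μ₁ → InSimplex μ₂ →
      ∀ t : ℝ, 0 ≤ t → t ≤ 1 →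
        t * Vstar s μ₁ + (1 - t) * Vstar s μ₂ ≤
          Vstar s (fun θ => t * μ₁ θ + (1 - t) * μ₂ θ))
    (Vhat : S → (Θ → ℝ) → ℝ)
    (hVhatFix : ∀ s, ∀ μ ∈ Mhat,
      brApproxBellman f g C γ α Mhat w Vhat s μ = Vhat s μ) :
    ∀ s, ∀ μ ∈ Mhat, Vhat s μ ≤ Vstar s μ := by
  exact approx_value_lower_bound_general (fun θ => ⟨hf0 θ, hf1 θ⟩) hγ0 hγ1 hα0 hα1 hMsub hw0 hw1 hwB
    (fun s => concaveOn_stdSimplex_of_forall_inSimplex (hVstarConcave s))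
    (fun s μ hμ => (hVstarFix s μ (hMsub μ hμ)).le) (fun s μ hμ => (hVhatFix s μ hμ).ge)
    (Set.finite_range _).bddAbove

end
end

section
/- Conditional value-at-risk is convex: for integrable random variables X, Y on a probability space, any t ∈ [0,1], and any risk level α ∈ [0,1), CVaR_α(t·X + (1−t)·Y) ≤ t·CVaR_α(X) + (1−t)·CVaR_α(Y), where CVaR_α(X) = inf_{φ ∈ ℝ} (φ + (1−α)^{-1}·𝔼[max(X − φ, 0)]). -/
open MeasureTheory

/-- The conditional value-at-risk at level `α` of a random variable `X` under
the probability measure `P`, via the Rockafellar–Uryasev formula. -/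
noncomputable def CVaR {Ω : Type*} [MeasurableSpace Ω] (P : Measure Ω)
    (α : ℝ) (X : Ω → ℝ) : ℝ :=
  ⨅ φ : ℝ, φ + (1 - α)⁻¹ * ∫ ω, max (X ω - φ) 0 ∂P

/-!
The function `(X, φ) ↦ φ + (1 - α)⁻¹ * 𝔼[max (X - φ) 0]` is jointly convex, and minimizing a
jointly convex function over one of its variables leaves a convex function of the other. The
real-valued infimum is meaningful because for `0 ≤ α < 1` this function is bounded below by `𝔼[X]`.
-/

theorem convexOn_iInf_of_convexOn_prod {E F : Type*} [AddCommMonoid E] [SMul ℝ E]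
    [AddCommMonoid F] [SMul ℝ F] {s : Set E} {f : E × F → ℝ}
    (hf : ConvexOn ℝ (s ×ˢ Set.univ) f)
    (hbdd : ∀ x ∈ s, BddBelow (Set.range fun y => f (x, y))) :
    ConvexOn ℝ s fun x => ⨅ y, f (x, y) := by
  have hs : Convex ℝ s := fun x hx x' hx' a b ha hb hab =>
    (hf.1 (x := (x, 0)) ⟨hx, trivial⟩ (y := (x', 0)) ⟨hx', trivial⟩ ha hb hab).1
  refine ⟨hs, fun x hx x' hx' a b ha hb hab => ?_⟩
  simp only [smul_eq_mul, Real.mul_iInf_of_nonneg ha, Real.mul_iInf_of_nonneg hb]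
  refine le_ciInf_add_ciInf fun y y' => ?_
  calc ⨅ z, f (a • x + b • x', z)
      ≤ f (a • x + b • x', a • y + b • y') := ciInf_le (hbdd _ (hs hx hx' ha hb hab)) _
    _ ≤ a * f (x, y) + b * f (x', y') :=
        hf.2 (x := (x, y)) ⟨hx, trivial⟩ (y := (x', y')) ⟨hx', trivial⟩ ha hb hab

section

variable {Ω : Type*} [MeasurableSpace Ω]

theorem convexOn_integral {E : Type*} [AddCommMonoid E] [SMul ℝ E] {μ : Measure Ω}
    {s : Set E} {f : E → Ω → ℝ} (hs : Convex ℝ s)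
    (hf : ∀ᵐ ω ∂μ, ConvexOn ℝ s fun x => f x ω) (hint : ∀ x ∈ s, Integrable (f x) μ) :
    ConvexOn ℝ s fun x => ∫ ω, f x ω ∂μ := by
  refine ⟨hs, fun x hx y hy a b ha hb hab => ?_⟩
  have hfx : Integrable (fun ω => a * f x ω) μ := (hint x hx).const_mul a
  have hfy : Integrable (fun ω => b * f y ω) μ := (hint y hy).const_mul b
  calc ∫ ω, f (a • x + b • y) ω ∂μ
      ≤ ∫ ω, (a * f x ω + b * f y ω) ∂μ := by
        refine integral_mono_ae (hint _ (hs hx hy ha hb hab)) (hfx.add hfy) ?_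
        filter_upwards [hf] with ω hω using hω.2 hx hy ha hb hab
    _ = a * ∫ ω, f x ω ∂μ + b * ∫ ω, f y ω ∂μ := by
        rw [integral_add hfx hfy, integral_const_mul, integral_const_mul]

theorem convex_setOf_integrable {E : Type*} [NormedAddCommGroup E] [NormedSpace ℝ E]
    (μ : Measure Ω) : Convex ℝ {X : Ω → E | Integrable X μ} :=
  fun _ hX _ hY a b _ _ _ => (hX.smul a).add (hY.smul b)

theorem convexOn_integral_max_sub_zero (μ : Measure Ω) [IsFiniteMeasure μ] :
    ConvexOn ℝ ({X : Ω → ℝ | Integrable X μ} ×ˢ Set.univ)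
      fun p : (Ω → ℝ) × ℝ => ∫ ω, max (p.1 ω - p.2) 0 ∂μ := by
  have domain_convex : Convex ℝ ({X : Ω → ℝ | Integrable X μ} ×ˢ (Set.univ : Set ℝ)) :=
    (convex_setOf_integrable μ).prod convex_univ
  refine convexOn_integral domain_convex (.of_forall fun ω => ?_)
    fun p hp => (hp.1.sub (integrable_const p.2)).pos_part
  let excess : (Ω → ℝ) × ℝ →ₗ[ℝ] ℝ :=
    LinearMap.proj ω ∘ₗ LinearMap.fst ℝ (Ω → ℝ) ℝ - LinearMap.snd ℝ (Ω → ℝ) ℝ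
  exact (excess.convexOn domain_convex).sup (convexOn_const 0 domain_convex)

/-- The Rockafellar–Uryasev objective, whose infimum over the threshold `φ` is `CVaR P α X`. -/
noncomputable def cvarObjective (P : Measure Ω) (α : ℝ) (X : Ω → ℝ) (φ : ℝ) : ℝ :=
  φ + (1 - α)⁻¹ * ∫ ω, max (X ω - φ) 0 ∂P

theorem convexOn_cvarObjective (P : Measure Ω) [IsFiniteMeasure P] {α : ℝ} (hα : α ≤ 1) :
    ConvexOn ℝ ({X : Ω → ℝ | Integrable X P} ×ˢ Set.univ)
      fun p : (Ω → ℝ) × ℝ => cvarObjective P α p.1 p.2 :=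
  have expected_excess_convex := convexOn_integral_max_sub_zero P
  ((LinearMap.snd ℝ (Ω → ℝ) ℝ).convexOn expected_excess_convex.1).add
    (expected_excess_convex.smul (inv_nonneg.2 (sub_nonneg.2 hα)))

variable {P : Measure Ω} [IsProbabilityMeasure P] {α : ℝ}

theorem integral_le_cvarObjective (hα0 : 0 ≤ α) (hα1 : α < 1) {X : Ω → ℝ}
    (hX : Integrable X P) (φ : ℝ) : ∫ ω, X ω ∂P ≤ cvarObjective P α X φ := by
  have hXφ : Integrable (fun ω => X ω - φ) P := hX.sub (integrable_const φ)
  have one_le_factor : 1 ≤ (1 - α)⁻¹ := (one_le_inv₀ (sub_pos.2 hα1)).2 (sub_le_self 1 hα0)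
  calc ∫ ω, X ω ∂P
      = φ + ∫ ω, (X ω - φ) ∂P := by simp [integral_sub hX (integrable_const φ)]
    _ ≤ φ + ∫ ω, max (X ω - φ) 0 ∂P := by
        gcongr φ + ?_
        exact integral_mono hXφ hXφ.pos_part fun ω => le_max_left _ _
    _ ≤ φ + (1 - α)⁻¹ * ∫ ω, max (X ω - φ) 0 ∂P := by
        gcongr φ + ?_
        exact le_mul_of_one_le_left (integral_nonneg fun ω => le_max_right _ _) one_le_factor

theorem convexOn_cvar (hα0 : 0 ≤ α) (hα1 : α < 1) :
    ConvexOn ℝ {X : Ω → ℝ | Integrable X P} (CVaR P α) :=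
  convexOn_iInf_of_convexOn_prod (convexOn_cvarObjective P hα1.le)
    fun X hX => ⟨∫ ω, X ω ∂P, Set.forall_mem_range.2 (integral_le_cvarObjective hα0 hα1 hX)⟩

end

/-- CVaR is convex:
`CVaR_α(t·X + (1−t)·Y) ≤ t·CVaR_α(X) + (1−t)·CVaR_α(Y)` for integrable `X, Y`,
`t ∈ [0,1]` and risk level `α ∈ [0,1)`. -/
theorem cvar_convex {Ω : Type*} [MeasurableSpace Ω] (P : Measure Ω)
    [IsProbabilityMeasure P]
    (α : ℝ) (hα0 : 0 ≤ α) (hα1 : α < 1)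
    (X Y : Ω → ℝ) (hX : Integrable X P) (hY : Integrable Y P)
    (t : ℝ) (ht0 : 0 ≤ t) (ht1 : t ≤ 1) :
    CVaR P α (fun ω => t * X ω + (1 - t) * Y ω) ≤
      t * CVaR P α X + (1 - t) * CVaR P α Y :=
  (convexOn_cvar hα0 hα1).2 hX hY ht0 (sub_nonneg.2 ht1) (add_sub_cancel t 1)
end
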